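/- arXiv:2208.07490 — 7 statements merged into one kernel-verified Lean document; each statement's English description precedes it below -/
import Mathlib

section
/- Let V be a finite-dimensional real inner product space and let S1, S2, ψ1, ψ2 be linear endomorphisms of V satisfying, for all X, Z ∈ V, the identity S1X ∧ S1Z + ψ1X ∧ Z + X ∧ ψ1Z = S2X ∧ S2Z + ψ2X ∧ Z + X ∧ ψ2Z of endomorphisms of V. Then the bilinear map Θ : V × V → ℝ⁴ defined by Θ(X,Y) = (⟨S1X, Y⟩, (1/√2)⟨(id + ψ1 − ψ2)X, Y⟩, ⟨S2X, Y⟩, (1/√2)⟨(id − ψ1 + ψ2)X, Y⟩) is flat with respect to ⟨⟨·,·⟩⟩. -/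
open scoped RealInnerProductSpace

/-- The wedge product of two vectors: `(X ∧ Y) Z = ⟨Y, Z⟩ X − ⟨X, Z⟩ Y`. -/
noncomputable def wedge {V : Type*} [NormedAddCommGroup V] [InnerProductSpace ℝ V]
    (X Y : V) : V →ₗ[ℝ] V where
  toFun Z := ⟪Y, Z⟫ • X - ⟪X, Z⟫ • Y
  map_add' Z W := by
    simp only [inner_add_right, add_smul]
    abel
  map_smul' c Z := by
    simp only [real_inner_smul_right, RingHom.id_apply, smul_sub, smul_smul]

/-- The bilinear map `Θ` associated to the operators `S1, S2, ψ1, ψ2`. -/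
noncomputable def Theta {V : Type*} [NormedAddCommGroup V] [InnerProductSpace ℝ V]
    (S1 S2 ψ1 ψ2 : V →ₗ[ℝ] V) (X Y : V) : Fin 4 → ℝ :=
  ![⟪S1 X, Y⟫, (1 / Real.sqrt 2) * ⟪X + ψ1 X - ψ2 X, Y⟫,
    ⟪S2 X, Y⟫, (1 / Real.sqrt 2) * ⟪X - ψ1 X + ψ2 X, Y⟫]

/-- The bilinear form of signature (2,2) on `ℝ⁴`. -/
def bform (u v : Fin 4 → ℝ) : ℝ := u 0 * v 0 + u 1 * v 1 - u 2 * v 2 - u 3 * v 3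

theorem theta_flat {V : Type*} [NormedAddCommGroup V] [InnerProductSpace ℝ V]
    [FiniteDimensional ℝ V] (S1 S2 ψ1 ψ2 : V →ₗ[ℝ] V)
    (hGauss : ∀ X Z : V,
      wedge (S1 X) (S1 Z) + wedge (ψ1 X) Z + wedge X (ψ1 Z) =
        wedge (S2 X) (S2 Z) + wedge (ψ2 X) Z + wedge X (ψ2 Z)) :
    ∀ X Y Z T : V,
      bform (Theta S1 S2 ψ1 ψ2 X Y) (Theta S1 S2 ψ1 ψ2 Z T) =
        bform (Theta S1 S2 ψ1 ψ2 X T) (Theta S1 S2 ψ1 ψ2 Z Y) := by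
  intro X Y Z T
  have h := congrArg (fun f : V →ₗ[ℝ] V => ⟪f T, Y⟫) (hGauss X Z)
  simp only [LinearMap.add_apply, wedge, LinearMap.coe_mk, AddHom.coe_mk, inner_add_left,
    inner_sub_left, real_inner_smul_left] at h
  have hs : (1 / Real.sqrt 2) * (1 / Real.sqrt 2) = 1 / 2 := by
    rw [div_mul_div_comm, Real.mul_self_sqrt (by norm_num)]
    norm_num
  simp only [bform, Theta, Matrix.cons_val, inner_add_left, inner_sub_left]
  generalize 1 / Real.sqrt 2 = c at hs
  linear_combination h + 2 * (⟪X, Y⟫ * (⟪ψ1 Z, T⟫ - ⟪ψ2 Z, T⟫) + (⟪ψ1 X, Y⟫ - ⟪ψ2 X, Y⟫) * ⟪Z, T⟫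
    - ⟪X, T⟫ * (⟪ψ1 Z, Y⟫ - ⟪ψ2 Z, Y⟫) - (⟪ψ1 X, T⟫ - ⟪ψ2 X, T⟫) * ⟪Z, Y⟫) * hs
end

section
/- Let V be a real inner product space of finite dimension n ≥ 1 and let S1, S2, ψ1, ψ2 be linear endomorphisms of V with tr S1 = 0 = tr S2, tr ψ1 = tr ψ2, and S1 ≠ 0. Define Θ : V × V → ℝ⁴ by Θ(X,Y) = (⟨S1X, Y⟩, (1/√2)⟨(id + ψ1 − ψ2)X, Y⟩, ⟨S2X, Y⟩, (1/√2)⟨(id − ψ1 + ψ2)X, Y⟩). If Θ is null with respect to ⟨⟨·,·⟩⟩, then ψ1 = ψ2 and either S1 = S2 or S1 = −S2. -/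
open scoped RealInnerProductSpace

theorem theta_null_implies_congruent {V : Type*} [NormedAddCommGroup V]
    [InnerProductSpace ℝ V] [FiniteDimensional ℝ V]
    (hn : 1 ≤ Module.finrank ℝ V) (S1 S2 ψ1 ψ2 : V →ₗ[ℝ] V)
    (htr1 : LinearMap.trace ℝ V S1 = 0) (htr2 : LinearMap.trace ℝ V S2 = 0)
    (htrψ : LinearMap.trace ℝ V ψ1 = LinearMap.trace ℝ V ψ2)
    (hS1 : S1 ≠ 0)
    (hnull : ∀ X Y Z T : V,
      bform (Theta S1 S2 ψ1 ψ2 X Y) (Theta S1 S2 ψ1 ψ2 Z T) = 0) :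
    ψ1 = ψ2 ∧ (S1 = S2 ∨ S1 = -S2) := by
  have key : ∀ X Y Z T : V, ⟪S1 X, Y⟫ * ⟪S1 Z, T⟫ - ⟪S2 X, Y⟫ * ⟪S2 Z, T⟫
      + ⟪X, Y⟫ * ⟪(ψ1 - ψ2) Z, T⟫ + ⟪(ψ1 - ψ2) X, Y⟫ * ⟪Z, T⟫ = 0 := by
    intro X Y Z T
    have h := hnull X Y Z T
    have h2 : (1 / Real.sqrt 2) * (1 / Real.sqrt 2) = 1 / 2 := by
      rw [div_mul_div_comm, Real.mul_self_sqrt (by norm_num)]; norm_num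
    simp only [bform, Theta, Matrix.cons_val, inner_add_left, inner_sub_left] at h
    simp only [LinearMap.sub_apply, inner_sub_left]
    generalize 1 / Real.sqrt 2 = c at h h2
    linear_combination h - 2 * (⟪X, Y⟫ * (⟪ψ1 Z, T⟫ - ⟪ψ2 Z, T⟫)
      + (⟪ψ1 X, Y⟫ - ⟪ψ2 X, Y⟫) * ⟪Z, T⟫) * h2
  have hD : ∀ X Y : V, ⟪(ψ1 - ψ2) X, Y⟫ = 0 := by
    intro X Y
    have h0 : ⟪S1 X, Y⟫ • S1 - ⟪S2 X, Y⟫ • S2 + ⟪X, Y⟫ • (ψ1 - ψ2)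
        + ⟪(ψ1 - ψ2) X, Y⟫ • (LinearMap.id : V →ₗ[ℝ] V) = 0 := by
      ext Z
      refine ext_inner_right ℝ fun T => ?_
      have h := key X Y Z T
      simp only [LinearMap.add_apply, LinearMap.sub_apply, LinearMap.smul_apply,
        LinearMap.id_apply, LinearMap.zero_apply, inner_add_left, inner_sub_left,
        real_inner_smul_left, inner_zero_left] at h ⊢
      linarith
    have h1 := congrArg (LinearMap.trace ℝ V) h0
    rw [map_add, map_add, map_sub, map_smul, map_smul, map_smul, map_smul, map_sub,
      htr1, htr2, htrψ, LinearMap.trace_id, map_zero] at h1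
    have hn' : (Module.finrank ℝ V : ℝ) ≠ 0 := by
      have : Module.finrank ℝ V ≠ 0 := by omega
      exact_mod_cast this
    simp only [smul_eq_mul, mul_zero, sub_self, zero_add] at h1
    exact (mul_eq_zero.mp h1).resolve_right hn'
  refine ⟨?_, ?_⟩
  · ext X
    refine ext_inner_right ℝ fun Y => ?_
    have h := hD X Y
    rw [LinearMap.sub_apply, inner_sub_left] at h
    linarith
  · obtain ⟨X, Y, hXY⟩ : ∃ X Y : V, ⟪S1 X, Y⟫ ≠ 0 := by
      by_contra! hc
      apply hS1
      ext X
      refine ext_inner_right ℝ fun Y => ?_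
      simpa using hc X Y
    have key2 : ∀ Z T : V, ⟪S1 X, Y⟫ * ⟪S1 Z, T⟫ = ⟪S2 X, Y⟫ * ⟪S2 Z, T⟫ := by
      intro Z T
      have h := key X Y Z T
      rw [hD, hD] at h
      linarith
    rcases mul_self_eq_mul_self_iff.mp (key2 X Y) with h | h
    · left
      ext Z
      refine ext_inner_right ℝ fun T => ?_
      have h3 := key2 Z T
      rw [← h] at h3
      exact mul_left_cancel₀ hXY h3
    · right
      ext Z
      refine ext_inner_right ℝ fun T => ?_
      have h3 := key2 Z T
      apply mul_left_cancel₀ hXY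
      rw [LinearMap.neg_apply, inner_neg_left, h3, h]
      ring
end

section
/- Let V be a finite-dimensional real inner product space and let S1, S2 be linear endomorphisms of V with S1 ≠ 0 such that ⟨S1X, Y⟩·S1 = ⟨S2X, Y⟩·S2 (equality of endomorphisms of V) for all X, Y ∈ V. Then S1 = S2 or S1 = −S2. -/
open scoped RealInnerProductSpace

theorem smul_eq_smul_of_inner {V : Type*} [NormedAddCommGroup V]
    [InnerProductSpace ℝ V] [FiniteDimensional ℝ V]
    (S1 S2 : V →ₗ[ℝ] V) (hS1 : S1 ≠ 0)
    (h : ∀ X Y : V, ⟪S1 X, Y⟫ • S1 = ⟪S2 X, Y⟫ • S2) :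
    S1 = S2 ∨ S1 = -S2 := by
  obtain ⟨x, hx⟩ : ∃ x, S1 x ≠ 0 := by
    by_contra hc
    push Not at hc
    exact hS1 (LinearMap.ext hc)
  have ha : ⟪S1 x, S1 x⟫ ≠ 0 := inner_self_ne_zero.mpr hx
  have h1 := h x (S1 x)
  have h2 : ⟪S1 x, S1 x⟫ * ⟪S1 x, S1 x⟫ = ⟪S2 x, S1 x⟫ * ⟪S2 x, S1 x⟫ := by
    have h3 := congrArg (fun T : V →ₗ[ℝ] V => ⟪T x, S1 x⟫) h1
    simpa only [LinearMap.smul_apply, real_inner_smul_left] using h3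
  rcases mul_self_eq_mul_self_iff.mp h2 with h4 | h4
  · left
    rw [← h4] at h1
    exact smul_right_injective _ ha h1
  · right
    have h5 : ⟪S2 x, S1 x⟫ = -⟪S1 x, S1 x⟫ := by linarith
    rw [h5, neg_smul, ← smul_neg] at h1
    exact smul_right_injective _ ha h1
end

section
/- Let V be a 2-dimensional real inner product space, let S be a self-adjoint endomorphism of V with tr S = 0, and let J be a nonzero endomorphism of V with J ∘ J = 0. If S ∘ J is self-adjoint and tr(S ∘ J) = 0, then S = 0. -/
open scoped RealInnerProductSpace

theorem parabolic_case_forces_zero {V : Type*} [NormedAddCommGroup V]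
    [InnerProductSpace ℝ V] [FiniteDimensional ℝ V]
    (hdim : Module.finrank ℝ V = 2)
    (S J : V →ₗ[ℝ] V) (hsym : S.IsSymmetric)
    (htr : LinearMap.trace ℝ V S = 0)
    (hJ0 : J ≠ 0) (hJ2 : J ∘ₗ J = 0)
    (hsymSJ : (S ∘ₗ J).IsSymmetric)
    (htrSJ : LinearMap.trace ℝ V (S ∘ₗ J) = 0) :
    S = 0 := by
  let e : OrthonormalBasis (Fin 2) ℝ V :=
    (stdOrthonormalBasis ℝ V).reindex (finCongr hdim)
  have key : ∀ T : V →ₗ[ℝ] V, T.IsSymmetric →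
      LinearMap.toMatrix e.toBasis e.toBasis T 0 1
        = LinearMap.toMatrix e.toBasis e.toBasis T 1 0 := by
    intro T hT
    simp only [LinearMap.toMatrix_apply, OrthonormalBasis.coe_toBasis_repr_apply,
      OrthonormalBasis.coe_toBasis, OrthonormalBasis.repr_apply_apply]
    rw [← hT, real_inner_comm]
  have h1 := key S hsym
  have h2 := key _ hsymSJ
  rw [LinearMap.trace_eq_matrix_trace ℝ e.toBasis] at htr htrSJ
  have h3 := congrArg (LinearMap.toMatrix e.toBasis e.toBasis) hJ2
  rw [LinearMap.toMatrix_comp e.toBasis e.toBasis e.toBasis, map_zero] at h3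
  rw [LinearMap.toMatrix_comp e.toBasis e.toBasis e.toBasis] at h2 htrSJ
  have hJ : LinearMap.toMatrix e.toBasis e.toBasis J ≠ 0 := by simpa using hJ0
  suffices h : LinearMap.toMatrix e.toBasis e.toBasis S = 0 by simpa using h
  generalize LinearMap.toMatrix e.toBasis e.toBasis S = A at *
  generalize LinearMap.toMatrix e.toBasis e.toBasis J = B at *
  have b00 := congrFun (congrFun h3 0) 0
  have b01 := congrFun (congrFun h3 0) 1
  have b10 := congrFun (congrFun h3 1) 0
  have b11 := congrFun (congrFun h3 1) 1
  simp only [Matrix.trace_fin_two, Matrix.mul_apply, Fin.sum_univ_two, Matrix.zero_apply]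
    at htr htrSJ h2 b00 b01 b10 b11
  have hA11 : A 1 1 = - A 0 0 := by linarith
  rw [hA11, ← h1] at htrSJ h2
  -- the trace of `B` vanishes
  have hs : B 0 0 + B 1 1 = 0 := by
    by_contra hne
    have q0 : B 0 1 = 0 := (mul_eq_zero.mp (by linarith :
      B 0 1 * (B 0 0 + B 1 1) = 0)).resolve_right hne
    have p0 : B 0 0 = 0 := by rw [q0] at b00; simpa using b00
    have s0 : B 1 1 = 0 := by rw [q0] at b11; simpa using b11
    exact hne (by rw [p0, s0, add_zero])
  have hB11 : B 1 1 = - B 0 0 := by linarith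
  rw [hB11] at htrSJ h2
  have hu : A 0 0 * (B 0 1 + B 1 0) - A 0 1 * (2 * B 0 0) = 0 := by linarith
  have hv : A 0 0 * (2 * B 0 0) + A 0 1 * (B 0 1 + B 1 0) = 0 := by linarith
  have hprod : (A 0 0 ^ 2 + A 0 1 ^ 2) * ((B 0 1 + B 1 0) ^ 2 + (2 * B 0 0) ^ 2) = 0 := by
    linear_combination (A 0 0 * (B 0 1 + B 1 0) - A 0 1 * (2 * B 0 0)) * hu
      + (A 0 0 * (2 * B 0 0) + A 0 1 * (B 0 1 + B 1 0)) * hv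
  rcases mul_eq_zero.mp hprod with h | h
  · have a0 : A 0 0 = 0 := by nlinarith [sq_nonneg (A 0 0), sq_nonneg (A 0 1)]
    have a1 : A 0 1 = 0 := by nlinarith [sq_nonneg (A 0 0), sq_nonneg (A 0 1)]
    ext i j
    fin_cases i <;> fin_cases j <;> simp [a0, a1, hA11, ← h1]
  · exfalso
    have p0 : B 0 0 = 0 := by nlinarith [sq_nonneg (B 0 0), sq_nonneg (B 0 1 + B 1 0)]
    have r0 : B 1 0 = - B 0 1 := by
      have : B 0 1 + B 1 0 = 0 := by nlinarith [sq_nonneg (B 0 0), sq_nonneg (B 0 1 + B 1 0)]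
      linarith
    have q0 : B 0 1 = 0 := by
      rw [p0, r0] at b00
      nlinarith
    apply hJ
    ext i j
    fin_cases i <;> fin_cases j <;> simp [p0, q0, r0, hB11]
end

section
/- Let V be a 2-dimensional real inner product space, let S be a self-adjoint endomorphism of V with tr S = 0, and let J be an endomorphism of V with J ∘ J = id, J ≠ id and J ≠ −id. If S ∘ J is self-adjoint and tr(S ∘ J) = 0, then S = 0. -/
open scoped RealInnerProductSpace

theorem entries_symm_aux {V : Type*} [NormedAddCommGroup V]
    [InnerProductSpace ℝ V] (e : OrthonormalBasis (Fin 2) ℝ V) (T : V →ₗ[ℝ] V)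
    (h : T.IsSymmetric) (i j : Fin 2) :
    LinearMap.toMatrix e.toBasis e.toBasis T i j =
      LinearMap.toMatrix e.toBasis e.toBasis T j i := by
  simp only [LinearMap.toMatrix_apply, OrthonormalBasis.coe_toBasis,
    OrthonormalBasis.coe_toBasis_repr_apply, OrthonormalBasis.repr_apply_apply]
  rw [← h (e i) (e j), real_inner_comm]

theorem matrix_aux (S J : Matrix (Fin 2) (Fin 2) ℝ) (h1 : S 0 1 = S 1 0)
    (h2 : S.trace = 0) (h3 : J * J = 1) (h4 : J ≠ 1) (h5 : J ≠ -1)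
    (h6 : (S * J) 0 1 = (S * J) 1 0) (h7 : (S * J).trace = 0) : S = 0 := by
  have e00 := congrFun (congrFun h3 0) 0
  have e01 := congrFun (congrFun h3 0) 1
  simp [Matrix.trace, Matrix.mul_apply, Fin.sum_univ_two] at h2 h6 h7 e00 e01
  have hd : S 1 1 = - S 0 0 := by linarith
  rw [hd, ← h1] at h6 h7
  have key : ∀ x : ℝ, x * ((J 0 0 - J 1 1)^2 + (J 0 1 + J 1 0)^2) = 0 →
      x = 0 := by
    intro x hx
    rcases mul_eq_zero.1 hx with h | h
    · exact h
    exfalso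
    have a1 : J 1 1 = J 0 0 := by nlinarith [sq_nonneg (J 0 0 - J 1 1), sq_nonneg (J 0 1 + J 1 0)]
    have a2 : J 1 0 = - J 0 1 := by nlinarith [sq_nonneg (J 0 0 - J 1 1), sq_nonneg (J 0 1 + J 1 0)]
    rw [a2] at e00
    rw [a1] at e01
    have hp : J 0 0 ≠ 0 := by
      intro h0
      rw [h0] at e00
      nlinarith [sq_nonneg (J 0 1)]
    have hq : J 0 1 = 0 := by
      have : J 0 0 * J 0 1 = 0 := by linarith
      exact (mul_eq_zero.1 this).resolve_left hp
    rw [hq] at e00 a2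
    have : (J 0 0 - 1) * (J 0 0 + 1) = 0 := by linarith
    rcases mul_eq_zero.1 this with h | h
    · apply h4
      have : J 0 0 = 1 := by linarith
      ext i j
      fin_cases i <;> fin_cases j <;> simp [*]
    · apply h5
      have : J 0 0 = -1 := by linarith
      ext i j
      fin_cases i <;> fin_cases j <;> simp [*]
  have ha : S 0 0 = 0 := key _ (by
    linear_combination (J 0 0 - J 1 1) * h7 + (J 0 1 + J 1 0) * h6)
  have hb : S 0 1 = 0 := key _ (by
    linear_combination (J 0 1 + J 1 0) * h7 - (J 0 0 - J 1 1) * h6)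
  ext i j
  fin_cases i <;> fin_cases j <;> simp [ha, hb, hd, ← h1]

theorem hyperbolic_case_forces_zero {V : Type*} [NormedAddCommGroup V]
    [InnerProductSpace ℝ V] [FiniteDimensional ℝ V]
    (hdim : Module.finrank ℝ V = 2)
    (S J : V →ₗ[ℝ] V) (hsym : S.IsSymmetric)
    (htr : LinearMap.trace ℝ V S = 0)
    (hJ2 : J ∘ₗ J = LinearMap.id) (hJid : J ≠ LinearMap.id) (hJnegid : J ≠ -LinearMap.id)
    (hsymSJ : (S ∘ₗ J).IsSymmetric)
    (htrSJ : LinearMap.trace ℝ V (S ∘ₗ J) = 0) :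
    S = 0 := by
  let e : OrthonormalBasis (Fin 2) ℝ V := (stdOrthonormalBasis ℝ V).reindex (finCongr hdim)
  let M := LinearMap.toMatrix e.toBasis e.toBasis
  have hmul : ∀ A B : V →ₗ[ℝ] V, M (A ∘ₗ B) = M A * M B := fun A B =>
    LinearMap.toMatrix_comp _ _ _ A B
  have hone : M LinearMap.id = 1 := LinearMap.toMatrix_id _
  have htrace : ∀ A : V →ₗ[ℝ] V, (M A).trace = LinearMap.trace ℝ V A := fun A =>
    (LinearMap.trace_eq_matrix_trace ℝ e.toBasis A).symm
  apply M.injective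
  rw [map_zero]
  apply matrix_aux (M S) (M J)
  · exact entries_symm_aux e S hsym 0 1
  · rw [htrace, htr]
  · rw [← hmul, hJ2, hone]
  · intro h
    exact hJid (M.injective (h.trans hone.symm))
  · intro h
    exact hJnegid (M.injective (by rw [h, map_neg, hone]))
  · rw [← hmul]
    exact entries_symm_aux e _ hsymSJ 0 1
  · rw [← hmul, htrace, htrSJ]
end

section
/- Let V be a 2-dimensional real inner product space, let S be a self-adjoint endomorphism of V with S ≠ 0 and tr S = 0, and let J be an endomorphism of V with J ∘ J = −id. If S ∘ J is self-adjoint and tr(S ∘ J) = 0, then J is a linear isometry of V, i.e., ⟨JX, JY⟩ = ⟨X, Y⟩ for all X, Y ∈ V (so J acts as a rotation through an angle π/2 on V). -/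
open scoped RealInnerProductSpace

theorem elliptic_case_J_isometry {V : Type*} [NormedAddCommGroup V]
    [InnerProductSpace ℝ V] [FiniteDimensional ℝ V]
    (hdim : Module.finrank ℝ V = 2)
    (S J : V →ₗ[ℝ] V) (hsym : S.IsSymmetric)
    (hS0 : S ≠ 0) (htr : LinearMap.trace ℝ V S = 0)
    (hJ2 : J ∘ₗ J = -LinearMap.id)
    (hsymSJ : (S ∘ₗ J).IsSymmetric)
    (htrSJ : LinearMap.trace ℝ V (S ∘ₗ J) = 0) :
    ∀ X Y : V, ⟪J X, J Y⟫ = ⟪X, Y⟫ := by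
  let b : OrthonormalBasis (Fin 2) ℝ V := (stdOrthonormalBasis ℝ V).reindex (finCongr hdim)
  obtain ⟨e, f, hee, hff, hef, hfe, hexp, htrace⟩ : ∃ e f : V, ⟪e, e⟫ = 1 ∧ ⟪f, f⟫ = 1 ∧
      ⟪e, f⟫ = 0 ∧ ⟪f, e⟫ = 0 ∧ (∀ x : V, ∃ s t : ℝ, x = s • e + t • f) ∧
      (∀ T : V →ₗ[ℝ] V, LinearMap.trace ℝ V T = ⟪e, T e⟫ + ⟪f, T f⟫) := by
    refine ⟨b 0, b 1, ?_, ?_, ?_, ?_, ?_, ?_⟩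
    · simp [b.inner_eq_ite]
    · simp [b.inner_eq_ite]
    · simp [b.inner_eq_ite]
    · simp [b.inner_eq_ite]
    · intro x
      refine ⟨b.repr x 0, b.repr x 1, ?_⟩
      have := b.sum_repr x
      rw [Fin.sum_univ_two] at this
      exact this.symm
    · intro T
      rw [LinearMap.trace_eq_sum_inner T b, Fin.sum_univ_two]
  obtain ⟨a, c, hSe⟩ := hexp (S e)
  obtain ⟨c', d, hSf⟩ := hexp (S f)
  obtain ⟨p, q, hJe⟩ := hexp (J e)
  obtain ⟨r, s, hJf⟩ := hexp (J f)
  have h1 := hsym e f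
  have h2 := hsymSJ e f
  have h3 := congrArg (fun x => ⟪e, x⟫) (LinearMap.congr_fun hJ2 e)
  have h4 := congrArg (fun x => ⟪f, x⟫) (LinearMap.congr_fun hJ2 e)
  rw [htrace] at htr htrSJ
  simp only [LinearMap.comp_apply, LinearMap.neg_apply, LinearMap.id_apply, hSe, hSf, hJe, hJf,
    map_add, map_smul, inner_add_left, inner_add_right, real_inner_smul_left,
    real_inner_smul_right, hee, hff, hef, hfe, inner_neg_right] at h1 h2 h3 h4 htr htrSJ
  have hc : c' = c := by linarith
  have hd : d = -a := by linarith
  subst hc hd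
  have hne : a ^ 2 + c' ^ 2 ≠ 0 := by
    intro h
    have ha : a = 0 := by nlinarith [sq_nonneg a, sq_nonneg c']
    have hc : c' = 0 := by nlinarith [sq_nonneg a, sq_nonneg c']
    apply hS0
    ext x
    obtain ⟨s, t, rfl⟩ := hexp x
    simp [hSe, hSf, ha, hc]
  have hps : s = p := by
    have : (a ^ 2 + c' ^ 2) * (s - p) = 0 := by linear_combination (-c') * h2 - a * htrSJ
    have := (mul_eq_zero.mp this).resolve_left hne
    linarith
  have hqr : r = -q := by
    have : (a ^ 2 + c' ^ 2) * (r + q) = 0 := by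
      subst hps
      linear_combination (-a) * h2 + c' * htrSJ
    have := (mul_eq_zero.mp this).resolve_left hne
    linarith
  subst hps hqr
  have hq : q ≠ 0 := by
    rintro rfl
    nlinarith [sq_nonneg s]
  have hp : s = 0 := by
    have : q * s = 0 := by linarith
    exact (mul_eq_zero.mp this).resolve_left hq
  subst hp
  have hqq : q * q = 1 := by linarith
  intro X Y
  obtain ⟨x, y, rfl⟩ := hexp X
  obtain ⟨z, w, rfl⟩ := hexp Y
  simp only [hJe, hJf,
    map_add, map_smul, inner_add_left, inner_add_right, real_inner_smul_left,
    real_inner_smul_right, hee, hff, hef, hfe]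
  linear_combination (x * z + y * w) * hqq
end

section
/- Let V be a real inner product space of finite dimension n ≥ 3 and let S1, S2 be self-adjoint endomorphisms of V with tr S1 = 0 = tr S2, tr(S1²) = tr(S2²), S1 ≠ 0, S1 ≠ S2 and S1 ≠ −S2. Set B = (1/(n−2))·(S1² − S2²). Suppose a nonzero vector T ∈ V satisfies, for every X ∈ V, the identity ⟨S1X, T⟩·S1 − ⟨S2X, T⟩·S2 + ⟨BX, T⟩·id + ⟨X, T⟩·B = 0 of endomorphisms of V. Then T is an eigenvector of both S1 and S2, and the corresponding eigenvalues μ1 and μ2 satisfy μ1² = μ2². -/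
open scoped RealInnerProductSpace

lemma trace_sq_pos_of_ne {V : Type*} [NormedAddCommGroup V]
    [InnerProductSpace ℝ V] [FiniteDimensional ℝ V] (S : V →ₗ[ℝ] V) (hS : S.IsSymmetric)
    (h0 : S ≠ 0) : 0 < LinearMap.trace ℝ V (S ∘ₗ S) := by
  have hb := LinearMap.trace_eq_sum_inner (S ∘ₗ S) (stdOrthonormalBasis ℝ V)
  have hs : LinearMap.trace ℝ V (S ∘ₗ S) = ∑ i, ‖S (stdOrthonormalBasis ℝ V i)‖ ^ 2 := by
    rw [hb]
    refine Finset.sum_congr rfl fun i _ => ?_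
    rw [LinearMap.comp_apply, ← hS, real_inner_self_eq_norm_sq]
  rw [hs]
  refine lt_of_le_of_ne (Finset.sum_nonneg fun i _ => sq_nonneg _) fun h => h0 ?_
  have h2 := (Finset.sum_eq_zero_iff_of_nonneg (fun i _ => sq_nonneg _)).1 h.symm
  refine (stdOrthonormalBasis ℝ V).toBasis.ext fun i => ?_
  simpa using h2 i (Finset.mem_univ i)

theorem common_eigenvector_of_flatness_identity {V : Type*} [NormedAddCommGroup V]
    [InnerProductSpace ℝ V] [FiniteDimensional ℝ V] {n : ℕ}
    (hn : 3 ≤ n) (hdim : Module.finrank ℝ V = n)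
    (S1 S2 : V →ₗ[ℝ] V) (hsym1 : S1.IsSymmetric) (hsym2 : S2.IsSymmetric)
    (htr1 : LinearMap.trace ℝ V S1 = 0) (htr2 : LinearMap.trace ℝ V S2 = 0)
    (htrsq : LinearMap.trace ℝ V (S1 ∘ₗ S1) = LinearMap.trace ℝ V (S2 ∘ₗ S2))
    (hS1 : S1 ≠ 0) (hne : S1 ≠ S2) (hne' : S1 ≠ -S2)
    (B : V →ₗ[ℝ] V) (hB : B = (1 / ((n : ℝ) - 2)) • (S1 ∘ₗ S1 - S2 ∘ₗ S2))
    (T : V) (hT : T ≠ 0)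
    (hident : ∀ X : V,
      ⟪S1 X, T⟫ • S1 - ⟪S2 X, T⟫ • S2 + ⟪B X, T⟫ • LinearMap.id + ⟪X, T⟫ • B = 0) :
    ∃ μ1 μ2 : ℝ, S1 T = μ1 • T ∧ S2 T = μ2 • T ∧ μ1 ^ 2 = μ2 ^ 2 := by
  have hn2 : (n : ℝ) - 2 ≠ 0 := by
    have : (3 : ℝ) ≤ n := by exact_mod_cast hn
    linarith
  have hn0 : (n : ℝ) ≠ 0 := by
    have : (3 : ℝ) ≤ n := by exact_mod_cast hn
    linarith
  have hBsym : ∀ x y : V, ⟪B x, y⟫ = ⟪x, B y⟫ := by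
    intro x y
    simp only [hB, LinearMap.smul_apply, LinearMap.sub_apply, LinearMap.comp_apply,
      inner_smul_left, inner_smul_right, inner_sub_left, inner_sub_right]
    rw [hsym1, hsym1, hsym2, hsym2]
    simp
  have htrB : LinearMap.trace ℝ V B = 0 := by
    rw [hB, map_smul, map_sub, htrsq, sub_self, smul_zero]
  have hBX : ∀ X : V, ⟪B X, T⟫ = 0 := by
    intro X
    have h := congrArg (LinearMap.trace ℝ V) (hident X)
    simp only [map_add, map_sub, map_smul, htr1, htr2, htrB, LinearMap.trace_id, hdim,
      smul_eq_mul, map_zero, mul_zero, sub_zero, zero_add, add_zero] at h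
    exact (mul_eq_zero.1 h).resolve_right hn0
  have hBT : B T = 0 := by
    apply ext_inner_left ℝ
    intro v
    rw [← hBsym, hBX, inner_zero_right]
  have hSS : S1 (S1 T) = S2 (S2 T) := by
    rw [hB] at hBT
    simp only [LinearMap.smul_apply, LinearMap.sub_apply, LinearMap.comp_apply] at hBT
    exact sub_eq_zero.1 ((smul_eq_zero.1 hBT).resolve_left (one_div_ne_zero hn2))
  have key : ∀ R : V →ₗ[ℝ] V, LinearMap.trace ℝ V (S1 ∘ₗ R) • S1 T
      - LinearMap.trace ℝ V (S2 ∘ₗ R) • S2 T = (-LinearMap.trace ℝ V (B ∘ₗ R)) • T := by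
    intro R
    apply ext_inner_left ℝ
    intro X
    have h := congrArg (fun L => LinearMap.trace ℝ V (L ∘ₗ R)) (hident X)
    simp only [hBX, zero_smul, add_zero, LinearMap.add_comp, LinearMap.sub_comp,
      LinearMap.smul_comp, map_add, map_sub, map_smul, smul_eq_mul, LinearMap.zero_comp,
      map_zero] at h
    rw [hsym1, hsym2] at h
    simp only [inner_sub_right, inner_smul_right]
    linarith
  have hcomm : LinearMap.trace ℝ V (S2 ∘ₗ S1) = LinearMap.trace ℝ V (S1 ∘ₗ S2) :=
    LinearMap.trace_comp_comm' _ _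
  have k1 := key S1
  have k2 := key S2
  have p1 := trace_sq_pos_of_ne (S1 - S2) (hsym1.sub hsym2) (sub_ne_zero.2 hne)
  have p2 := trace_sq_pos_of_ne (S1 + S2) (hsym1.add hsym2)
    (fun h => hne' (eq_neg_of_add_eq_zero_left h))
  simp only [LinearMap.add_comp, LinearMap.sub_comp, LinearMap.comp_add, LinearMap.comp_sub,
    map_add, map_sub] at p1 p2
  rw [hcomm] at k1 p1 p2
  rw [← htrsq] at k2 p1 p2
  generalize LinearMap.trace ℝ V (S1 ∘ₗ S1) = s at *
  generalize LinearMap.trace ℝ V (S1 ∘ₗ S2) = p at *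
  generalize -LinearMap.trace ℝ V (B ∘ₗ S1) = α at *
  generalize -LinearMap.trace ℝ V (B ∘ₗ S2) = β at *
  have hd : s ^ 2 - p ^ 2 ≠ 0 := by
    have : 0 < (s - p) * (s + p) := mul_pos (by linarith) (by linarith)
    nlinarith
  have e1 : (s ^ 2 - p ^ 2) • S1 T = (s * α - p * β) • T := by
    have : (s ^ 2 - p ^ 2) • S1 T = s • (s • S1 T - p • S2 T) - p • (p • S1 T - s • S2 T) := by
      module
    rw [this, k1, k2]; module
  have e2 : (s ^ 2 - p ^ 2) • S2 T = (p * α - s * β) • T := by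
    have : (s ^ 2 - p ^ 2) • S2 T = p • (s • S1 T - p • S2 T) - s • (p • S1 T - s • S2 T) := by
      module
    rw [this, k1, k2]; module
  have f1 := (eq_inv_smul_iff₀ hd).2 e1
  have f2 := (eq_inv_smul_iff₀ hd).2 e2
  rw [smul_smul] at f1 f2
  refine ⟨_, _, f1, f2, ?_⟩
  rw [f1, f2, map_smul, map_smul, f1, f2, smul_smul, smul_smul] at hSS
  have := smul_left_injective ℝ hT hSS
  simpa only [sq] using this
end
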